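/- Bound on the uncorrupted part of the averaged block step (inequality (eq5:4)): let A ∈ ℝ^{m×n} have rows a_1ᵀ, …, a_mᵀ with ‖a_i‖ = 1 for all i, let x̂, x ∈ ℝ^n, r ∈ ℝ^m, w > 0, and q ∈ (0, 1) with qm a positive integer. Let T₁ ⊆ {1, …, m} with |T₁| ≤ qm, and suppose b_i = ⟨a_i, x̂⟩ + r_i for every i ∈ T₁. Then ‖(w/(qm))·Σ_{i ∈ T₁}(⟨a_i, x⟩ − b_i)·a_i‖² ≤ (w²·σ_max(A)²/(q²m²))·(σ_max(A)·‖x − x̂‖ + √(qm)·‖r‖_∞)². -/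

import Mathlib

/-- Euclidean inner product on finite-dimensional real coordinate space. -/
noncomputable def ip {I : Type*} [Fintype I] (u v : I → ℝ) : ℝ := ∑ i, u i * v i

/-- Euclidean norm. -/
noncomputable def enorm2 {I : Type*} [Fintype I] (v : I → ℝ) : ℝ :=
  Real.sqrt (∑ i, (v i) ^ 2)

/-- ℓ₁ norm. -/
noncomputable def norm1 {I : Type*} [Fintype I] (v : I → ℝ) : ℝ := ∑ i, |v i|

/-- ℓ∞ norm. -/
noncomputable def normInf {I : Type*} [Fintype I] (v : I → ℝ) : ℝ := ⨆ i, |v i|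

/-- Subdifferential of a convex function. -/
def subdiff {I : Type*} [Fintype I] (f : (I → ℝ) → ℝ) (x : I → ℝ) : Set (I → ℝ) :=
  {g | ∀ y, f y ≥ f x + ip g (y - x)}

/-- Bregman distance `D_f^{g}(x, y)` with respect to `f` and subgradient `g ∈ ∂f(x)`. -/
noncomputable def breg {I : Type*} [Fintype I] (f : (I → ℝ) → ℝ) (g x y : I → ℝ) : ℝ :=
  f y - f x - ip g (y - x)

/-- Fenchel conjugate. -/
noncomputable def fconj {I : Type*} [Fintype I] (f : (I → ℝ) → ℝ) (u : I → ℝ) : ℝ :=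
  ⨆ z, (ip u z - f z)

/-- Soft shrinkage (soft thresholding) operator. -/
noncomputable def softShrink {I : Type*} [Fintype I] (lam : ℝ) (x : I → ℝ) : I → ℝ :=
  fun i => Real.sign (x i) * max (|x i| - lam) 0

/-- Smallest singular value `σ_min(M) = inf_{x ≠ 0} ‖Mx‖/‖x‖`. -/
noncomputable def sigmaMin {I J : Type*} [Fintype I] [Fintype J] (M : Matrix I J ℝ) : ℝ :=
  sInf {r | ∃ x : J → ℝ, x ≠ 0 ∧ r = enorm2 (M.mulVec x) / enorm2 x}

/-- Largest singular value `σ_max(M) = sup_{x ≠ 0} ‖Mx‖/‖x‖`. -/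
noncomputable def sigmaMax {I J : Type*} [Fintype I] [Fintype J] (M : Matrix I J ℝ) : ℝ :=
  sSup {r | ∃ x : J → ℝ, x ≠ 0 ∧ r = enorm2 (M.mulVec x) / enorm2 x}

/-- Frobenius norm. -/
noncomputable def frobNorm {I J : Type*} [Fintype I] [Fintype J] (M : Matrix I J ℝ) : ℝ :=
  Real.sqrt (∑ i, ∑ j, (M i j) ^ 2)

/-- `‖A‖_{1,2} = sqrt (∑ i ‖a_i‖₁²)` where `a_iᵀ` are the rows of `A`. -/
noncomputable def norm12 {m n : ℕ} (A : Matrix (Fin m) (Fin n) ℝ) : ℝ :=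
  Real.sqrt (∑ i, (norm1 (A i)) ^ 2)

/-- Column submatrix `A_J`. -/
noncomputable def colSub {m n : ℕ} (A : Matrix (Fin m) (Fin n) ℝ) (J : Finset (Fin n)) :
    Matrix (Fin m) {j // j ∈ J} ℝ := A.submatrix id Subtype.val

/-- Row submatrix `A_I`. -/
noncomputable def rowSub {m n : ℕ} (A : Matrix (Fin m) (Fin n) ℝ) (I : Finset (Fin m)) :
    Matrix {i // i ∈ I} (Fin n) ℝ := A.submatrix Subtype.val id

/-- Submatrix `A_{I,J}` with rows in `I` and columns in `J`. -/
noncomputable def subMat {m n : ℕ} (A : Matrix (Fin m) (Fin n) ℝ)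
    (I : Finset (Fin m)) (J : Finset (Fin n)) :
    Matrix {i // i ∈ I} {j // j ∈ J} ℝ := A.submatrix Subtype.val Subtype.val

/-- `σ̃_min(A) = min{σ_min(A_J) : J ⊆ {1,…,n}, A_J ≠ 0}`. -/
noncomputable def sigmaTildeMin {m n : ℕ} (A : Matrix (Fin m) (Fin n) ℝ) : ℝ :=
  sInf {r | ∃ J : Finset (Fin n), colSub A J ≠ 0 ∧ r = sigmaMin (colSub A J)}

/-- `σ̃_{q−β,min}(A)` (with `k = (q−β)m`): min of `σ_min(A_{I,J})` over `|I| = k` and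
`J` nonempty. -/
noncomputable def sigmaTildeQBMin {m n : ℕ} (A : Matrix (Fin m) (Fin n) ℝ) (k : ℕ) : ℝ :=
  sInf {r | ∃ (I : Finset (Fin m)) (J : Finset (Fin n)),
    I.card = k ∧ J.Nonempty ∧ r = sigmaMin (subMat A I J)}

/-- Variant of `σ̃_{q−β,min}(A)` requiring moreover `A_J ≠ 0`. -/
noncomputable def sigmaTildeQBMin' {m n : ℕ} (A : Matrix (Fin m) (Fin n) ℝ) (k : ℕ) : ℝ :=
  sInf {r | ∃ (I : Finset (Fin m)) (J : Finset (Fin n)),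
    I.card = k ∧ J.Nonempty ∧ colSub A J ≠ 0 ∧ r = sigmaMin (subMat A I J)}

/-- `σ_{q−β,min}(A)` (with `k = (q−β)m`): min of `σ_min(A_I)` over `|I| = k`. -/
noncomputable def sigmaQBMin {m n : ℕ} (A : Matrix (Fin m) (Fin n) ℝ) (k : ℕ) : ℝ :=
  sInf {r | ∃ I : Finset (Fin m), I.card = k ∧ r = sigmaMin (rowSub A I)}

/-- The increasingly sorted rearrangement `y_(1) ≤ … ≤ y_(m)` of a finite tuple. -/
noncomputable def sortedVal {m : ℕ} (y : Fin m → ℝ) : Fin m → ℝ := y ∘ Tuple.sort y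

/-- The `q`-quantile of `y_1, …, y_m` in the case where `qm = k` is an integer:
`(y_(k) + y_(k+1))/2` (1-indexed). -/
noncomputable def quantileAt {m : ℕ} (k : ℕ) (y : Fin m → ℝ) : ℝ :=
  if h : 0 < k ∧ k < m then
    (sortedVal y ⟨k - 1, by omega⟩ + sortedVal y ⟨k, h.2⟩) / 2
  else 0

/-- `|x̂|_min = min{|x̂_j| : x̂_j ≠ 0}`. -/
noncomputable def xminOf {n : ℕ} (xhat : Fin n → ℝ) : ℝ :=
  sInf {r | ∃ j, xhat j ≠ 0 ∧ r = |xhat j|}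

/-!
On `T` the residual `⟨a_i, x⟩ - b_i` is the `i`-th entry of `A (x - x̂) - r`, so the block sum is
`Aᵀ` applied to the truncation of this vector to `T`. The operator norm of `Aᵀ` is `σ_max(A)`,
truncation does not increase the Euclidean norm of `A (x - x̂)`, and the truncation of `r` has at
most `|T|` nonzero entries, each bounded in absolute value by `‖r‖_∞`.
-/

section Norms

variable {I : Type*} [Fintype I]

theorem enorm2_eq_norm_toLp (v : I → ℝ) : enorm2 v = ‖WithLp.toLp 2 v‖ := by
  simp only [enorm2, EuclideanSpace.norm_eq, Real.norm_eq_abs, sq_abs]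

theorem enorm2_nonneg (v : I → ℝ) : 0 ≤ enorm2 v := Real.sqrt_nonneg _

theorem enorm2_pos {v : I → ℝ} (hv : v ≠ 0) : 0 < enorm2 v := by
  simpa [enorm2_eq_norm_toLp] using hv

theorem enorm2_smul (c : ℝ) (v : I → ℝ) : enorm2 (c • v) = |c| * enorm2 v := by
  simp only [enorm2_eq_norm_toLp, WithLp.toLp_smul, norm_smul, Real.norm_eq_abs]

theorem enorm2_sub_le (u v : I → ℝ) : enorm2 (u - v) ≤ enorm2 u + enorm2 v := by
  simpa only [enorm2_eq_norm_toLp, WithLp.toLp_sub] using norm_sub_le _ _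

theorem normInf_nonneg (v : I → ℝ) : 0 ≤ normInf v := Real.iSup_nonneg fun _ ↦ abs_nonneg _

theorem abs_apply_le_normInf (v : I → ℝ) (i : I) : |v i| ≤ normInf v :=
  le_ciSup (f := fun i ↦ |v i|) (Set.finite_range _).bddAbove i

theorem enorm2_indicator (T : Finset I) (v : I → ℝ) :
    enorm2 ((T : Set I).indicator v) = √(∑ i ∈ T, v i ^ 2) := by
  classical
  simp [enorm2, Set.indicator_apply, ite_pow, Finset.sum_ite_mem]

theorem enorm2_indicator_le (T : Finset I) (v : I → ℝ) :
    enorm2 ((T : Set I).indicator v) ≤ enorm2 v := by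
  rw [enorm2_indicator]
  exact Real.sqrt_le_sqrt (Finset.sum_le_univ_sum_of_nonneg fun _ ↦ sq_nonneg _)

theorem enorm2_indicator_le_sqrt_card_mul_normInf (T : Finset I) (v : I → ℝ) :
    enorm2 ((T : Set I).indicator v) ≤ √T.card * normInf v := by
  have hsum : ∑ i ∈ T, v i ^ 2 ≤ T.card * normInf v ^ 2 := by
    rw [← nsmul_eq_mul]
    refine Finset.sum_le_card_nsmul _ _ _ fun i _ ↦ ?_
    exact sq_le_sq.2 ((abs_apply_le_normInf v i).trans (le_abs_self _))
  calc enorm2 ((T : Set I).indicator v) = √(∑ i ∈ T, v i ^ 2) := enorm2_indicator T v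
    _ ≤ √(T.card * normInf v ^ 2) := Real.sqrt_le_sqrt hsum
    _ = √T.card * normInf v := by
      rw [Real.sqrt_mul T.card.cast_nonneg, Real.sqrt_sq (normInf_nonneg v)]

end Norms

section SigmaMax

open scoped Matrix Matrix.Norms.L2Operator

variable {I J : Type*} [Fintype I] [Fintype J]

theorem enorm2_mulVec_le_l2_opNorm [DecidableEq J] (A : Matrix I J ℝ) (v : J → ℝ) :
    enorm2 (A *ᵥ v) ≤ ‖A‖ * enorm2 v := by
  rw [enorm2_eq_norm_toLp, enorm2_eq_norm_toLp]
  exact A.l2_opNorm_mulVec (WithLp.toLp 2 v)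

theorem sigmaMax_nonneg (A : Matrix I J ℝ) : 0 ≤ sigmaMax A := by
  refine Real.sSup_nonneg ?_
  rintro _ ⟨x, -, rfl⟩
  exact div_nonneg (enorm2_nonneg _) (enorm2_nonneg _)

theorem enorm2_mulVec_le (A : Matrix I J ℝ) (v : J → ℝ) :
    enorm2 (A *ᵥ v) ≤ sigmaMax A * enorm2 v := by
  classical
  obtain rfl | hv := eq_or_ne v 0
  · simp [enorm2]
  rw [← div_le_iff₀ (enorm2_pos hv)]
  refine le_csSup ⟨‖A‖, ?_⟩ ⟨v, hv, rfl⟩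
  rintro _ ⟨x, hx, rfl⟩
  exact (div_le_iff₀ (enorm2_pos hx)).2 (enorm2_mulVec_le_l2_opNorm A x)

theorem sigmaMax_eq_l2_opNorm [DecidableEq J] (A : Matrix I J ℝ) : sigmaMax A = ‖A‖ := by
  refine le_antisymm (Real.sSup_le ?_ (norm_nonneg A)) ?_
  · rintro _ ⟨x, -, rfl⟩
    exact div_le_of_le_mul₀ (enorm2_nonneg x) (norm_nonneg A) (enorm2_mulVec_le_l2_opNorm A x)
  · rw [Matrix.l2_opNorm_def]
    refine ContinuousLinearMap.opNorm_le_bound _ (sigmaMax_nonneg A) fun v ↦ ?_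
    have hv := enorm2_mulVec_le A v.ofLp
    rwa [enorm2_eq_norm_toLp, enorm2_eq_norm_toLp] at hv

theorem sigmaMax_transpose (A : Matrix I J ℝ) : sigmaMax Aᵀ = sigmaMax A := by
  classical
  rw [sigmaMax_eq_l2_opNorm, sigmaMax_eq_l2_opNorm, ← Matrix.conjTranspose_eq_transpose_of_trivial,
    Matrix.l2_opNorm_conjTranspose]

theorem enorm2_vecMul_le (A : Matrix I J ℝ) (c : I → ℝ) :
    enorm2 (c ᵥ* A) ≤ sigmaMax A * enorm2 c := by
  simpa only [Matrix.mulVec_transpose, sigmaMax_transpose] using enorm2_mulVec_le Aᵀ c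

end SigmaMax

section BlockStep

open scoped Matrix

theorem sum_smul_row_eq_indicator_vecMul {I J R : Type*} [Fintype I] [NonUnitalNonAssocSemiring R]
    (A : Matrix I J R) (T : Finset I) (c : I → R) :
    ∑ i ∈ T, c i • A i = (T : Set I).indicator c ᵥ* A := by
  classical
  simp [Matrix.vecMul_eq_sum, Set.indicator_apply, ite_smul, Finset.sum_ite_mem]

variable {I J : Type*} [Fintype I] [Fintype J]

theorem sum_residual_smul_row_eq_vecMul (A : Matrix I J ℝ) (xhat x : J → ℝ) (r b : I → ℝ)
    (T : Finset I) (hb : ∀ i ∈ T, b i = ip (A i) xhat + r i) :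
    ∑ i ∈ T, (ip (A i) x - b i) • A i = (T : Set I).indicator (A *ᵥ (x - xhat) - r) ᵥ* A := by
  rw [← sum_smul_row_eq_indicator_vecMul]
  refine Finset.sum_congr rfl fun i hi ↦ ?_
  have hres : A *ᵥ (x - xhat) = fun i ↦ ip (A i) x - ip (A i) xhat := Matrix.mulVec_sub A x xhat
  rw [hb i hi, hres, Pi.sub_apply, sub_sub]

theorem enorm2_indicator_mulVec_sub_le (A : Matrix I J ℝ) (v : J → ℝ) (r : I → ℝ) (T : Finset I) :
    enorm2 ((T : Set I).indicator (A *ᵥ v - r)) ≤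
      sigmaMax A * enorm2 v + √T.card * normInf r := by
  rw [Set.indicator_sub']
  calc _ ≤ enorm2 ((T : Set I).indicator (A *ᵥ v)) + enorm2 ((T : Set I).indicator r) :=
        enorm2_sub_le _ _
    _ ≤ sigmaMax A * enorm2 v + √T.card * normInf r :=
        add_le_add ((enorm2_indicator_le T _).trans (enorm2_mulVec_le A v))
          (enorm2_indicator_le_sqrt_card_mul_normInf T r)

theorem stmt19_general (A : Matrix I J ℝ) (xhat x : J → ℝ) (r : I → ℝ) (c k : ℝ) (T : Finset I)
    (hT : (T.card : ℝ) ≤ k) (b : I → ℝ) (hb : ∀ i ∈ T, b i = ip (A i) xhat + r i) :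
    enorm2 (c • ∑ i ∈ T, (ip (A i) x - b i) • A i) ^ 2 ≤
      c ^ 2 * sigmaMax A ^ 2 * (sigmaMax A * enorm2 (x - xhat) + √k * normInf r) ^ 2 := by
  rw [sum_residual_smul_row_eq_vecMul A xhat x r b T hb, enorm2_smul, mul_pow, sq_abs, mul_assoc,
    ← mul_pow (sigmaMax A)]
  have hσ := sigmaMax_nonneg A
  have hr := normInf_nonneg r
  gcongr
  · exact enorm2_nonneg _
  calc _ ≤ sigmaMax A * enorm2 ((T : Set I).indicator (A *ᵥ (x - xhat) - r)) :=
        enorm2_vecMul_le A _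
    _ ≤ sigmaMax A * (sigmaMax A * enorm2 (x - xhat) + √T.card * normInf r) := by
        gcongr; exact enorm2_indicator_mulVec_sub_le A _ r T
    _ ≤ sigmaMax A * (sigmaMax A * enorm2 (x - xhat) + √k * normInf r) := by gcongr

end BlockStep

/-- inequality (eq5:4): bound on the uncorrupted part of the averaged
block step:
`‖(w/(qm)) ∑_{i ∈ T₁} (⟨a_i,x⟩ − b_i) a_i‖² ≤ (w²σ_max²/(q²m²)) (σ_max ‖x−x̂‖ + √(qm) ‖r‖_∞)²`. -/
theorem stmt19 {m n : ℕ} (A : Matrix (Fin m) (Fin n) ℝ)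
    (hrows : ∀ i, enorm2 (A i) = 1)
    (xhat x : Fin n → ℝ) (r : Fin m → ℝ)
    (w : ℝ) (hw : 0 < w)
    (q : ℝ) (hq : q ∈ Set.Ioo (0 : ℝ) 1)
    (kq : ℕ) (hkq : (kq : ℝ) = q * m) (hkq0 : 0 < kq)
    (T1 : Finset (Fin m)) (hT1 : (T1.card : ℝ) ≤ q * m)
    (b : Fin m → ℝ) (hb : ∀ i ∈ T1, b i = ip (A i) xhat + r i) :
    enorm2 ((w / (q * m)) • ∑ i ∈ T1, (ip (A i) x - b i) • A i) ^ 2 ≤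
      (w ^ 2 * (sigmaMax A) ^ 2 / (q ^ 2 * m ^ 2)) *
        (sigmaMax A * enorm2 (x - xhat) + Real.sqrt (q * m) * normInf r) ^ 2 := by
  simpa only [div_pow, mul_pow, div_mul_eq_mul_div] using
    stmt19_general A xhat x r (w / (q * m)) (q * m) T1 hT1 b hb
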